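/- Let X be a complex Banach space, T a bounded linear operator on X, and (C_m)_{m≥1} a sequence of positive real numbers increasing to +∞. Suppose there exist nonzero vectors (x_m)_{m≥1} in X satisfying: (WNU1) lim_{k→∞} ‖T^k x_m‖ = 0 for every m, and (WNU2) there is a sequence of positive integers (N_m) increasing to +∞ such that lim_{m→∞} #{0 ≤ i ≤ N_m − 1 : ‖T^i x_m‖ ≥ C_m‖x_m‖} / N_m = 1. Then T is distributionally chaotic. -/

import Mathlib

open Filter Topology MeasureTheory
open scoped Classical ENNReal

noncomputable def distFreq {X : Type*} [MetricSpace X] (f : X → X) (x y : X) (τ : ℝ) (n : ℕ) : ℝ :=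
  (((Finset.range n).filter fun i => dist (f^[i] x) (f^[i] y) < τ).card : ℝ) / n

def DistributionallyChaoticPair {X : Type*} [MetricSpace X] (f : X → X) (x y : X) : Prop :=
  (∀ τ : ℝ, 0 < τ → Filter.limsup (distFreq f x y τ) Filter.atTop = 1) ∧
  (∃ ε : ℝ, 0 < ε ∧ Filter.liminf (distFreq f x y ε) Filter.atTop = 0)

def DistributionallyChaotic {X : Type*} [MetricSpace X] (f : X → X) : Prop :=
  ∃ Λ : Set X, ¬Λ.Countable ∧
    ∀ x ∈ Λ, ∀ y ∈ Λ, x ≠ y → DistributionallyChaoticPair f x y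

def LiYorkePair {X : Type*} [MetricSpace X] (f : X → X) (x y : X) : Prop :=
  0 < Filter.limsup (fun n => edist (f^[n] x) (f^[n] y)) Filter.atTop ∧
  Filter.liminf (fun n => edist (f^[n] x) (f^[n] y)) Filter.atTop = 0

def LiYorkeChaotic {X : Type*} [MetricSpace X] (f : X → X) : Prop :=
  ∃ Γ : Set X, ¬Γ.Countable ∧ ∀ x ∈ Γ, ∀ y ∈ Γ, x ≠ y → LiYorkePair f x y

def NormUnimodal {X : Type*} [NormedAddCommGroup X] [NormedSpace ℂ X] (T : X →L[ℂ] X) : Prop :=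
  ∃ r : ℝ, 1 < r ∧ ∀ m : ℕ, ∃ x : X, x ≠ 0 ∧
    Filter.Tendsto (fun k => ‖(T ^ k) x‖) Filter.atTop (nhds 0) ∧
    ∀ i : ℕ, 1 ≤ i → i ≤ m → r ^ i * ‖x‖ ≤ ‖(T ^ i) x‖

/-! A vector `z` is distributionally irregular when its orbit is arbitrarily small along a set of
times of upper density `1` and arbitrarily large along another one; the differences of two points
of the line spanned by `z` are multiples of `z`, so every pair on that line is distributionally
chaotic. Irregular vectors are found by Baire category in the closure of the space of vectors with
null orbit. There, being small at most times is generic because null orbits are eventually small.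
Being large at most times is generic because a rescaled copy of `x m` is a tiny perturbation with
null orbit which is nevertheless huge at most times before `N m`. -/

section UpperDensity

/-- The proportion of the times `0, …, n - 1` that lie in `s`; the value at `n = 0` is `0`. -/
noncomputable def initialFreq (s : Set ℕ) (n : ℕ) : ℝ :=
  (((Finset.range n).filter fun i => i ∈ s).card : ℝ) / n

/-- The upper asymptotic density of a set of natural numbers. -/
noncomputable def upperDensity (s : Set ℕ) : ℝ :=
  limsup (initialFreq s) atTop

lemma initialFreq_setOf (p : ℕ → Prop) [DecidablePred p] (n : ℕ) :
    initialFreq {i | p i} n = (((Finset.range n).filter p).card : ℝ) / n := by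
  unfold initialFreq
  congr!

lemma initialFreq_nonneg (s : Set ℕ) (n : ℕ) : 0 ≤ initialFreq s n := by
  unfold initialFreq
  positivity

lemma initialFreq_add_compl (s : Set ℕ) {n : ℕ} (hn : n ≠ 0) :
    initialFreq s n + initialFreq sᶜ n = 1 := by
  have hcard := Finset.card_filter_add_card_filter_not (s := Finset.range n) (· ∈ s)
  rw [Finset.card_range] at hcard
  simp only [initialFreq, Set.mem_compl_iff]
  rw [← add_div, div_eq_one_iff_eq (Nat.cast_ne_zero.2 hn)]
  exact_mod_cast hcard

lemma initialFreq_le_one (s : Set ℕ) (n : ℕ) : initialFreq s n ≤ 1 := by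
  rcases eq_or_ne n 0 with rfl | hn
  · simp [initialFreq]
  · linarith [initialFreq_add_compl s hn, initialFreq_nonneg sᶜ n]

lemma initialFreq_mono {s t : Set ℕ} {n : ℕ} (h : ∀ i < n, i ∈ s → i ∈ t) :
    initialFreq s n ≤ initialFreq t n := by
  unfold initialFreq
  gcongr ((Finset.card ?_ : ℕ) : ℝ) / _
  intro i hi
  rw [Finset.mem_filter, Finset.mem_range] at hi ⊢
  exact ⟨hi.1, h i hi.1 hi.2⟩

lemma tendsto_initialFreq_of_eventually_mem {s : Set ℕ} (hs : ∀ᶠ i in atTop, i ∈ s) :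
    Tendsto (initialFreq s) atTop (𝓝 1) := by
  have hind : Tendsto (fun i => if i ∈ s then (1 : ℝ) else 0) atTop (𝓝 1) :=
    tendsto_const_nhds.congr' (hs.mono fun i hi => (if_pos hi).symm)
  refine hind.cesaro.congr fun n => ?_
  rw [Finset.sum_boole, inv_mul_eq_div, initialFreq]

lemma isBoundedUnder_le_initialFreq (s : Set ℕ) :
    IsBoundedUnder (· ≤ ·) atTop (initialFreq s) :=
  isBoundedUnder_of ⟨1, initialFreq_le_one s⟩

lemma isCoboundedUnder_le_initialFreq (s : Set ℕ) :
    IsCoboundedUnder (· ≤ ·) atTop (initialFreq s) :=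
  IsBoundedUnder.isCoboundedUnder_le (isBoundedUnder_of ⟨0, initialFreq_nonneg s⟩)

lemma upperDensity_eq_one_iff {s : Set ℕ} :
    upperDensity s = 1 ↔ ∀ c < 1, ∃ᶠ n in atTop, c < initialFreq s n := by
  constructor
  · intro h c hc
    exact frequently_lt_of_lt_limsup (isCoboundedUnder_le_initialFreq s) (hc.trans_eq h.symm)
  · intro h
    refine le_antisymm (limsup_le_of_le (isCoboundedUnder_le_initialFreq s)
      (.of_forall (initialFreq_le_one s))) (le_of_forall_lt fun c hc => ?_)
    obtain ⟨d, hcd, hd⟩ := exists_between hc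
    exact hcd.trans_le (le_limsup_of_frequently_le ((h d hd).mono fun _ => le_of_lt)
      (isBoundedUnder_le_initialFreq s))

lemma upperDensity_eq_one_mono {s t : Set ℕ} (hst : s ⊆ t) (hs : upperDensity s = 1) :
    upperDensity t = 1 :=
  upperDensity_eq_one_iff.2 fun c hc => (upperDensity_eq_one_iff.1 hs c hc).mono fun _ hn =>
    hn.trans_le (initialFreq_mono fun _ _ hi => hst hi)

lemma upperDensity_empty : upperDensity ∅ = 0 := by
  have h : initialFreq ∅ = fun _ => 0 := by
    funext n
    simp [initialFreq]
  rw [upperDensity, h, limsup_const]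

lemma liminf_initialFreq (s : Set ℕ) :
    liminf (initialFreq s) atTop = 1 - upperDensity sᶜ := by
  have hcompl : initialFreq s =ᶠ[atTop] fun n => 1 - initialFreq sᶜ n :=
    (eventually_ne_atTop 0).mono fun n hn => eq_sub_of_add_eq (initialFreq_add_compl s hn)
  rw [liminf_congr hcompl, upperDensity]
  exact liminf_const_sub _ _ _ (isBoundedUnder_le_initialFreq _)
    (isCoboundedUnder_le_initialFreq _)

lemma distFreq_eq_initialFreq {X : Type*} [MetricSpace X] (f : X → X) (x y : X) (τ : ℝ) :
    distFreq f x y τ = initialFreq {i | dist (f^[i] x) (f^[i] y) < τ} :=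
  funext fun _ => (initialFreq_setOf _ _).symm

lemma distributionallyChaoticPair_iff_upperDensity {X : Type*} [MetricSpace X] {f : X → X}
    {x y : X} :
    DistributionallyChaoticPair f x y ↔
      (∀ τ : ℝ, 0 < τ → upperDensity {i | dist (f^[i] x) (f^[i] y) < τ} = 1) ∧
        ∃ ε : ℝ, 0 < ε ∧ upperDensity {i | ε ≤ dist (f^[i] x) (f^[i] y)} = 1 := by
  have hcompl (ε : ℝ) : {i | dist (f^[i] x) (f^[i] y) < ε}ᶜ =
      {i | ε ≤ dist (f^[i] x) (f^[i] y)} := by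
    ext i
    simp
  simp only [DistributionallyChaoticPair, distFreq_eq_initialFreq, liminf_initialFreq, hcompl,
    sub_eq_zero, eq_comm (a := (1 : ℝ)), upperDensity]

end UpperDensity

section Category

lemma dense_preimage_coe_closure {X : Type*} [TopologicalSpace X] {s A : Set X}
    (h : s ⊆ closure (s ∩ A)) : Dense ((↑) ⁻¹' A : Set (closure s)) := by
  rw [Subtype.dense_iff, Subtype.image_preimage_coe]
  refine closure_minimal (h.trans (closure_mono ?_)) isClosed_closure
  exact Set.inter_subset_inter_left A subset_closure

variable {Y : Type*} [TopologicalSpace Y] {U : ℕ → Set Y}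

lemma isOpen_setOf_lt_initialFreq (hU : ∀ i, IsOpen (U i)) (c : ℝ) (n : ℕ) :
    IsOpen {y | c < initialFreq {i | y ∈ U i} n} := by
  refine isOpen_iff_mem_nhds.2 fun y hy => ?_
  have hstay : ∀ᶠ w in 𝓝 y, ∀ i ∈ Finset.range n, y ∈ U i → w ∈ U i :=
    (Filter.eventually_all_finset _).2 fun i _ =>
      eventually_imp_distrib_left.2 (hU i).eventually_mem
  filter_upwards [hstay] with w hw
  exact hy.trans_le (initialFreq_mono fun i hi => hw i (Finset.mem_range.2 hi))

theorem eventually_residual_upperDensity_eq_one (hU : ∀ i, IsOpen (U i))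
    (hd : ∀ c < 1, ∀ n₀, Dense {y | ∃ n ≥ n₀, c < initialFreq {i | y ∈ U i} n}) :
    ∀ᶠ y in residual Y, upperDensity {i | y ∈ U i} = 1 := by
  have hfreq (c : ℝ) (hc : c < 1) :
      ∀ᶠ y in residual Y, ∃ᶠ n in atTop, c < initialFreq {i | y ∈ U i} n := by
    simp only [frequently_atTop]
    refine eventually_countable_forall.2 fun n₀ => residual_of_dense_open ?_ (hd c hc n₀)
    have hunion : {y | ∃ n ≥ n₀, c < initialFreq {i | y ∈ U i} n} =
        ⋃ n ≥ n₀, {y | c < initialFreq {i | y ∈ U i} n} := by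
      ext y
      simp
    rw [hunion]
    exact isOpen_biUnion fun n _ => isOpen_setOf_lt_initialFreq hU c n
  obtain ⟨u, -, hu_lt, hu⟩ := exists_seq_strictMono_tendsto (1 : ℝ)
  filter_upwards [eventually_countable_forall.2 fun k => hfreq (u k) (hu_lt k)] with y hy
  refine upperDensity_eq_one_iff.2 fun c hc => ?_
  obtain ⟨k, hk⟩ := (hu.eventually_const_lt hc).exists
  exact (hy k).mono fun _ => hk.trans

end Category

section IrregularVectors

variable {𝕜 X Z : Type*} [NontriviallyNormedField 𝕜] [NormedAddCommGroup X] [NormedSpace 𝕜 X]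
  [NormedAddCommGroup Z] [NormedSpace 𝕜 Z] {S : ℕ → X →L[𝕜] Z}

/-- `z` is a distributionally irregular vector for the sequence of operators `S`: the values `S i z`
tend to `0`, and also tend to infinity, along sets of indices of upper density `1`. Each limit is
encoded threshold by threshold, which is equivalent by a diagonal argument. For a single operator
`T`, take `S i = T ^ i`. -/
structure IsDistributionallyIrregular (S : ℕ → X →L[𝕜] Z) (z : X) : Prop where
  upperDensity_small : ∀ τ : ℝ, 0 < τ → upperDensity {i | ‖S i z‖ < τ} = 1
  upperDensity_large : ∀ R : ℝ, upperDensity {i | R < ‖S i z‖} = 1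

/-- The subspace of vectors along which the operators `S i` tend to `0`. -/
def nullOrbitSubmodule (S : ℕ → X →L[𝕜] Z) : Submodule 𝕜 X where
  carrier := {v | Tendsto (fun i => S i v) atTop (𝓝 0)}
  add_mem' ha hb := by simpa using Tendsto.add ha hb
  zero_mem' := by simp
  smul_mem' c _ ha := by simpa using Tendsto.const_smul ha c

lemma mem_nullOrbitSubmodule_iff_norm {v : X} :
    v ∈ nullOrbitSubmodule S ↔ Tendsto (fun i => ‖S i v‖) atTop (𝓝 0) :=
  tendsto_zero_iff_norm_tendsto_zero

/-- Arbitrarily close to `0` there are vectors of `nullOrbitSubmodule S` that `S i` makes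
arbitrarily large for most of the indices `i` below some arbitrarily large `n`. This makes large
values generic in the closure of `nullOrbitSubmodule S`. -/
def ExpandsSmallNullVectors (S : ℕ → X →L[𝕜] Z) : Prop :=
  ∀ δ > 0, ∀ R : ℝ, ∀ c < 1, ∀ n₀, ∃ w ∈ nullOrbitSubmodule S, ‖w‖ < δ ∧
    ∃ n ≥ n₀, c < initialFreq {i | R < ‖S i w‖} n

lemma expandsSmallNullVectors_of_relative_growth
    (h : ∀ R : ℝ, ∀ c < 1, ∀ n₀, ∃ x ∈ nullOrbitSubmodule S, x ≠ 0 ∧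
      ∃ n ≥ n₀, c < initialFreq {i | R * ‖x‖ ≤ ‖S i x‖} n) :
    ExpandsSmallNullVectors S := by
  intro δ hδ R c hc n₀
  obtain ⟨a, ha⟩ := NormedField.exists_one_lt_norm 𝕜
  have hδa : 0 < δ / ‖a‖ := by positivity
  obtain ⟨x, hx_null, hx, n, hn, hfreq⟩ := h ((|R| + 1) / (δ / ‖a‖)) c hc n₀
  obtain ⟨d, -, hd_lt, hd_ge, -⟩ := rescale_to_shell ha hδ hx
  refine ⟨d • x, (nullOrbitSubmodule S).smul_mem d hx_null, hd_lt, n, hn,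
    hfreq.trans_le (initialFreq_mono fun i _ hi => ?_)⟩
  calc R < |R| + 1 := by linarith [le_abs_self R]
    _ = (|R| + 1) / (δ / ‖a‖) * (δ / ‖a‖) := (div_mul_cancel₀ _ hδa.ne').symm
    _ ≤ (|R| + 1) / (δ / ‖a‖) * ‖d • x‖ := by gcongr
    _ = ‖d‖ * ((|R| + 1) / (δ / ‖a‖) * ‖x‖) := by rw [norm_smul]; ring
    _ ≤ ‖d‖ * ‖S i x‖ := mul_le_mul_of_nonneg_left hi (norm_nonneg d)
    _ = ‖S i (d • x)‖ := by rw [map_smul, norm_smul]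

lemma dense_frequently_small {τ c : ℝ} (hτ : 0 < τ) (hc : c < 1) (n₀ : ℕ) :
    Dense {y : closure (nullOrbitSubmodule S : Set X) |
      ∃ n ≥ n₀, c < initialFreq {i | ‖S i y‖ < τ} n} := by
  refine dense_preimage_coe_closure (A := {v | ∃ n ≥ n₀, c < initialFreq {i | ‖S i v‖ < τ} n})
    fun v hv => subset_closure ⟨hv, ?_⟩
  have hsmall : ∀ᶠ i in atTop, ‖S i v‖ < τ :=
    (mem_nullOrbitSubmodule_iff_norm.1 hv).eventually_lt_const hτ
  have hfreq := (tendsto_initialFreq_of_eventually_mem hsmall).eventually_const_lt hc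
  exact ((eventually_ge_atTop n₀).and hfreq).exists

namespace ExpandsSmallNullVectors

lemma dense_frequently_large (hS : ExpandsSmallNullVectors S) (R : ℝ) {c : ℝ} (hc : c < 1)
    (n₀ : ℕ) :
    Dense {y : closure (nullOrbitSubmodule S : Set X) |
      ∃ n ≥ n₀, c < initialFreq {i | R < ‖S i y‖} n} := by
  refine dense_preimage_coe_closure (A := {v | ∃ n ≥ n₀, c < initialFreq {i | R < ‖S i v‖} n})
    fun v hv => Metric.mem_closure_iff.2 fun δ hδ => ?_
  obtain ⟨K, hK⟩ := (mem_nullOrbitSubmodule_iff_norm.1 hv).bddAbove_range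
  obtain ⟨w, hw_null, hw_lt, n, hn, hfreq⟩ := hS δ hδ (R + K) c hc n₀
  refine ⟨v + w, ⟨(nullOrbitSubmodule S).add_mem hv hw_null, n, hn, hfreq.trans_le ?_⟩,
    by rwa [dist_self_add_right]⟩
  refine initialFreq_mono fun i _ (hi : R + K < ‖S i w‖) => ?_
  have hKi : ‖S i v‖ ≤ K := hK ⟨i, rfl⟩
  have htri : ‖S i w‖ ≤ ‖S i (v + w)‖ + ‖S i v‖ := by
    simpa using norm_sub_le (S i (v + w)) (S i v)
  change R < ‖S i (v + w)‖
  linarith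

theorem eventually_residual_isDistributionallyIrregular (hS : ExpandsSmallNullVectors S) :
    ∀ᶠ y : closure (nullOrbitSubmodule S : Set X) in residual _,
      IsDistributionallyIrregular S (y : X) := by
  have hsmall (k : ℕ) : ∀ᶠ y : closure (nullOrbitSubmodule S : Set X) in residual _,
      upperDensity {i | ‖S i y‖ < 1 / ((k : ℝ) + 1)} = 1 :=
    eventually_residual_upperDensity_eq_one
      (U := fun i => {y : closure (nullOrbitSubmodule S : Set X) | ‖S i y‖ < 1 / ((k : ℝ) + 1)})
      (fun i => isOpen_lt (by fun_prop) continuous_const)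
      fun _ hc => dense_frequently_small Nat.one_div_pos_of_nat hc
  have hlarge (k : ℕ) : ∀ᶠ y : closure (nullOrbitSubmodule S : Set X) in residual _,
      upperDensity {i | (k : ℝ) < ‖S i y‖} = 1 :=
    eventually_residual_upperDensity_eq_one
      (U := fun i => {y : closure (nullOrbitSubmodule S : Set X) | (k : ℝ) < ‖S i y‖})
      (fun i => isOpen_lt continuous_const (by fun_prop))
      fun _ hc => hS.dense_frequently_large k hc
  filter_upwards [eventually_countable_forall.2 hsmall, eventually_countable_forall.2 hlarge]
    with y hy_small hy_large
  constructor
  · intro τ hτ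
    obtain ⟨k, hk⟩ := exists_nat_one_div_lt hτ
    exact upperDensity_eq_one_mono (fun i hi => lt_trans hi hk) (hy_small k)
  · intro R
    obtain ⟨k, hk⟩ := exists_nat_gt R
    exact upperDensity_eq_one_mono (fun i hi => lt_trans hk hi) (hy_large k)

theorem exists_isDistributionallyIrregular [CompleteSpace X] (hS : ExpandsSmallNullVectors S) :
    ∃ z, IsDistributionallyIrregular S z := by
  have : CompleteSpace (closure (nullOrbitSubmodule S : Set X)) :=
    isClosed_closure.completeSpace_coe
  have : Nonempty (closure (nullOrbitSubmodule S : Set X)) :=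
    ⟨0, subset_closure (nullOrbitSubmodule S).zero_mem⟩
  obtain ⟨y, hy⟩ :=
    (dense_of_mem_residual hS.eventually_residual_isDistributionallyIrregular).nonempty
  exact ⟨y, hy⟩

end ExpandsSmallNullVectors

namespace IsDistributionallyIrregular

lemma ne_zero {z : X} (hz : IsDistributionallyIrregular S z) : z ≠ 0 := by
  rintro rfl
  simpa [upperDensity_empty] using hz.upperDensity_large 0

lemma distributionallyChaoticPair_smul {T : X →L[𝕜] X} {z : X}
    (hz : IsDistributionallyIrregular (fun i => T ^ i) z) {a b : 𝕜} (hab : a ≠ b) :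
    DistributionallyChaoticPair T (a • z) (b • z) := by
  have hpos : 0 < ‖a - b‖ := norm_pos_iff.2 (sub_ne_zero.2 hab)
  have hdist (i : ℕ) : dist (T^[i] (a • z)) (T^[i] (b • z)) = ‖a - b‖ * ‖(T ^ i) z‖ := by
    rw [← FunLike.coe_pow_eq_iterate, dist_eq_norm, map_smul, map_smul, ← sub_smul, norm_smul]
  simp only [distributionallyChaoticPair_iff_upperDensity, hdist]
  refine ⟨fun τ hτ => ?_, ‖a - b‖, hpos, ?_⟩
  · refine upperDensity_eq_one_mono (fun i (hi : ‖(T ^ i) z‖ < τ / ‖a - b‖) => ?_)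
      (hz.upperDensity_small (τ / ‖a - b‖) (by positivity))
    exact (lt_div_iff₀' hpos).1 hi
  · refine upperDensity_eq_one_mono (fun i (hi : 1 < ‖(T ^ i) z‖) => ?_)
      (hz.upperDensity_large 1)
    exact le_mul_of_one_le_right hpos.le hi.le

theorem distributionallyChaotic [CompleteSpace 𝕜] {T : X →L[𝕜] X} {z : X}
    (hz : IsDistributionallyIrregular (fun i => T ^ i) z) : DistributionallyChaotic T := by
  refine ⟨Set.range fun a : 𝕜 => a • z, fun hcount => ?_, ?_⟩
  · have : Countable 𝕜 := by
      rw [← Set.countable_univ_iff]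
      refine Set.countable_of_injective_of_countable_image
        (smul_left_injective 𝕜 hz.ne_zero).injOn ?_
      rwa [Set.image_univ]
    exact Cardinal.aleph0_lt_continuum.not_ge
      ((continuum_le_cardinal_of_nontriviallyNormedField 𝕜).trans Cardinal.mk_le_aleph0)
  · rintro _ ⟨a, rfl⟩ _ ⟨b, rfl⟩ hab
    exact hz.distributionallyChaoticPair_smul (ne_of_apply_ne (· • z) hab)

end IsDistributionallyIrregular

end IrregularVectors

theorem stmt_1_general {𝕜 X : Type*} [NontriviallyNormedField 𝕜] [CompleteSpace 𝕜]
    [NormedAddCommGroup X] [NormedSpace 𝕜 X] [CompleteSpace X] (T : X →L[𝕜] X) (C : ℕ → ℝ)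
    (hCtop : Tendsto C atTop atTop) (x : ℕ → X) (hx : ∀ m, x m ≠ 0)
    (WNU1 : ∀ m, Tendsto (fun k => ‖(T ^ k) (x m)‖) atTop (𝓝 0))
    (N : ℕ → ℕ) (hNtop : Tendsto N atTop atTop)
    (WNU2 : Tendsto
      (fun m => (((Finset.range (N m)).filter
          fun i => C m * ‖x m‖ ≤ ‖(T ^ i) (x m)‖).card : ℝ) / N m)
      atTop (𝓝 1)) :
    DistributionallyChaotic T := by
  have hexp : ExpandsSmallNullVectors fun i => T ^ i := by
    refine expandsSmallNullVectors_of_relative_growth fun R c hc n₀ => ?_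
    obtain ⟨m, hR, hn, hfreq⟩ := ((hCtop.eventually_ge_atTop R).and
      ((hNtop.eventually_ge_atTop n₀).and (WNU2.eventually_const_lt hc))).exists
    rw [← initialFreq_setOf] at hfreq
    refine ⟨x m, mem_nullOrbitSubmodule_iff_norm.2 (WNU1 m), hx m, N m, hn,
      hfreq.trans_le (initialFreq_mono fun i _ hi => ?_)⟩
    exact (mul_le_mul_of_nonneg_right hR (norm_nonneg (x m))).trans hi
  obtain ⟨z, hz⟩ := hexp.exists_isDistributionallyIrregular
  exact hz.distributionallyChaotic

/-- Weakly Distributionally Chaotic Criterion. -/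
theorem stmt_1 {X : Type*} [NormedAddCommGroup X] [NormedSpace ℂ X] [CompleteSpace X]
    (T : X →L[ℂ] X) (C : ℕ → ℝ) (hCpos : ∀ m, 0 < C m) (hCmono : Monotone C)
    (hCtop : Filter.Tendsto C Filter.atTop Filter.atTop)
    (x : ℕ → X) (hx : ∀ m, x m ≠ 0)
    (WNU1 : ∀ m, Filter.Tendsto (fun k => ‖(T ^ k) (x m)‖) Filter.atTop (nhds 0))
    (N : ℕ → ℕ) (hNpos : ∀ m, 0 < N m) (hNmono : Monotone N)
    (hNtop : Filter.Tendsto N Filter.atTop Filter.atTop)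
    (WNU2 : Filter.Tendsto
      (fun m => (((Finset.range (N m)).filter
          fun i => C m * ‖x m‖ ≤ ‖(T ^ i) (x m)‖).card : ℝ) / N m)
      Filter.atTop (nhds 1)) :
    DistributionallyChaotic (fun z => T z) := by
  exact stmt_1_general T C hCtop x hx WNU1 N hNtop WNU2
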